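/- Let F ⊆ E be a flat, R a face of 𝒜_F, and 𝒻 : F = F_0 ⊊ F_1 ⊊ ⋯ ⊊ F_k = E a flag of flats based at F. Suppose S = F_j for some 0 ≤ j ≤ k and R' is a face of 𝒜_S contained in the topological closure of R. Then span(σ_{F,R}) ⊆ span(σ_{S,R'}) in Ñ, and the induced linear map W_{F,R} → W_{S,R'} maps C^{(F,R)}_𝒻 onto C^{(S,R')}_{trunc_S(𝒻)}, where trunc_S(𝒻) is the truncated flag S = F_j ⊊ F_{j+1} ⊊ ⋯ ⊊ F_k = E. (Second part of Lemma 6.2: the projection of the tropical cone to a deeper stratum is the truncated tropical cone.) -/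

import Mathlib

open Set Submodule

noncomputable section

variable {E : Type*} [Fintype E] [DecidableEq E]
variable {M : Type*} [NormedAddCommGroup M] [NormedSpace ℝ M] [FiniteDimensional ℝ M]

/-- The positive closed halfspace `H_e^+` of the hyperplane `H_e`. -/
def Hplus (a : E → (M →ₗ[ℝ] ℝ)) (r : E → ℝ) (e : E) : Set M := {m | a e m + r e ≤ 0}

/-- The negative closed halfspace `H_e^-` of the hyperplane `H_e`. -/
def Hminus (a : E → (M →ₗ[ℝ] ℝ)) (r : E → ℝ) (e : E) : Set M := {m | 0 ≤ a e m + r e}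

/-- `R` is a face of the localization `𝒜_S`: a nonempty fiber of the sign map
`M → SignType^S`, `m ↦ (sign (a e m + r e))_{e ∈ S}`. -/
def IsFace (a : E → (M →ₗ[ℝ] ℝ)) (r : E → ℝ) (S : Set E) (R : Set M) : Prop :=
  ∃ m₀ : M, R = {m : M | ∀ e ∈ S, SignType.sign (a e m + r e) = SignType.sign (a e m₀ + r e)}

/-- `S^+(R)`: the elements `e ∈ S` with `R ⊆ H_e^+`. -/
def posSet (a : E → (M →ₗ[ℝ] ℝ)) (r : E → ℝ) (S : Set E) (R : Set M) : Set E :=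
  {e ∈ S | R ⊆ Hplus a r e}

/-- `S^-(R)`: the elements `e ∈ S` with `R ⊆ H_e^-`. -/
def negSet (a : E → (M →ₗ[ℝ] ℝ)) (r : E → ℝ) (S : Set E) (R : Set M) : Set E :=
  {e ∈ S | R ⊆ Hminus a r e}

/-- `S^0(R) = S^+(R) ∩ S^-(R)`. -/
def zeroSet (a : E → (M →ₗ[ℝ] ℝ)) (r : E → ℝ) (S : Set E) (R : Set M) : Set E :=
  posSet a r S R ∩ negSet a r S R

/-- The linear map `(E → ℝ) → N` sending the basis vector `δ_e` to `a_e`. -/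
def toN (a : E → (M →ₗ[ℝ] ℝ)) : (E → ℝ) →ₗ[ℝ] (M →ₗ[ℝ] ℝ) :=
  Fintype.linearCombination ℝ a

/-- `Λ`, the kernel of `(E → ℝ) → N`. -/
def Lam (a : E → (M →ₗ[ℝ] ℝ)) : Submodule ℝ (E → ℝ) := LinearMap.ker (toN a)

/-- The antidiagonal embedding `∇ : x ↦ (x, -x)`. -/
def nabla : (E → ℝ) →ₗ[ℝ] (E → ℝ) × (E → ℝ) :=
  LinearMap.prod LinearMap.id (-LinearMap.id)

/-- `∇(Λ)`. -/
def nabLam (a : E → (M →ₗ[ℝ] ℝ)) : Submodule ℝ ((E → ℝ) × (E → ℝ)) :=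
  (Lam a).map nabla

/-- The Lawrence cocharacter space `Ñ = ((E → ℝ) × (E → ℝ))/∇(Λ)`. -/
abbrev tildeN (a : E → (M →ₗ[ℝ] ℝ)) : Type _ := ((E → ℝ) × (E → ℝ)) ⧸ nabLam a

/-- `ρ_e^+`, the image of `(δ_e, 0)` in `Ñ`. -/
def rhoP (a : E → (M →ₗ[ℝ] ℝ)) (e : E) : tildeN a :=
  Submodule.Quotient.mk (Pi.single e 1, 0)

/-- `ρ_e^-`, the image of `(0, δ_e)` in `Ñ`. -/
def rhoM (a : E → (M →ₗ[ℝ] ℝ)) (e : E) : tildeN a :=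
  Submodule.Quotient.mk (0, Pi.single e 1)

/-- The cone `σ_{S,R} ⊆ Ñ` generated by `{ρ_e^+ : e ∈ S^+(R)} ∪ {ρ_f^- : f ∈ S^-(R)}`
together with `0`: the set of all nonnegative linear combinations of these generators. -/
def sigmaCone (a : E → (M →ₗ[ℝ] ℝ)) (r : E → ℝ) (S : Set E) (R : Set M) : Set (tildeN a) :=
  {v | ∃ c d : E → ℝ, (∀ e, 0 ≤ c e) ∧ (∀ e, 0 ≤ d e) ∧
    v = ∑ e, (posSet a r S R).indicator c e • rhoP a e
      + ∑ e, (negSet a r S R).indicator d e • rhoM a e}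

/-- The addition map `(x, y) ↦ x + y` on `(E → ℝ) × (E → ℝ)`. -/
def addMap (E : Type*) [Fintype E] : ((E → ℝ) × (E → ℝ)) →ₗ[ℝ] (E → ℝ) :=
  LinearMap.fst ℝ (E → ℝ) (E → ℝ) + LinearMap.snd ℝ (E → ℝ) (E → ℝ)

lemma nabLam_le_ker_addMap (a : E → (M →ₗ[ℝ] ℝ)) :
    nabLam a ≤ LinearMap.ker (addMap E) := by
  rintro v ⟨x, hx, rfl⟩
  simp [addMap, nabla]

/-- The map `Φ̄ : Ñ → (E → ℝ)` induced by `(x, y) ↦ x + y`; it satisfies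
`Φ̄(ρ_e^+) = Φ̄(ρ_e^-) = δ_e`. -/
def Phibar (a : E → (M →ₗ[ℝ] ℝ)) : tildeN a →ₗ[ℝ] (E → ℝ) :=
  (nabLam a).liftQ (addMap E) (nabLam_le_ker_addMap a)

lemma Phibar_rhoP (a : E → (M →ₗ[ℝ] ℝ)) (e : E) :
    Phibar a (rhoP a e) = Pi.single e 1 := by
  simp [Phibar, rhoP, addMap]

lemma Phibar_rhoM (a : E → (M →ₗ[ℝ] ℝ)) (e : E) :
    Phibar a (rhoM a e) = Pi.single e 1 := by
  simp [Phibar, rhoM, addMap]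

/-- `ℝ^F`, the span of the coordinate vectors `δ_e` for `e ∈ F`. -/
def RF (E : Type*) [Fintype E] [DecidableEq E] (F : Set E) : Submodule ℝ (E → ℝ) :=
  Submodule.span ℝ ((fun e => Pi.single e (1 : ℝ)) '' F)

/-- The linear span of the cone `σ_{F,R}` in `Ñ`. -/
def spanSigma (a : E → (M →ₗ[ℝ] ℝ)) (r : E → ℝ) (F : Set E) (R : Set M) :
    Submodule ℝ (tildeN a) :=
  Submodule.span ℝ (sigmaCone a r F R)

/-- `W_{F,R} = Ñ / span(σ_{F,R})`. -/
abbrev Wspace (a : E → (M →ₗ[ℝ] ℝ)) (r : E → ℝ) (F : Set E) (R : Set M) : Type _ :=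
  tildeN a ⧸ spanSigma a r F R

/-- The quotient map `π_{F,R} : Ñ → W_{F,R}`. -/
def piFR (a : E → (M →ₗ[ℝ] ℝ)) (r : E → ℝ) (F : Set E) (R : Set M) :
    tildeN a →ₗ[ℝ] Wspace a r F R :=
  (spanSigma a r F R).mkQ

lemma spanSigma_le_ker (a : E → (M →ₗ[ℝ] ℝ)) (r : E → ℝ) (F : Set E) (R : Set M) :
    spanSigma a r F R ≤ LinearMap.ker ((RF E F).mkQ ∘ₗ Phibar a) := by
  rw [spanSigma, Submodule.span_le]
  rintro v ⟨c, d, hc, hd, rfl⟩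
  simp only [SetLike.mem_coe, LinearMap.mem_ker, LinearMap.comp_apply]
  rw [Submodule.mkQ_apply, Submodule.Quotient.mk_eq_zero, map_add, map_sum, map_sum]
  simp only [map_smul]
  apply Submodule.add_mem
  · apply Submodule.sum_mem
    intro e _
    by_cases he : e ∈ posSet a r F R
    · rw [Set.indicator_of_mem he]
      exact Submodule.smul_mem _ _
        (by rw [Phibar_rhoP]; exact Submodule.subset_span ⟨e, he.1, rfl⟩)
    · rw [Set.indicator_of_notMem he, zero_smul]
      exact Submodule.zero_mem _
  · apply Submodule.sum_mem
    intro e _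
    by_cases he : e ∈ negSet a r F R
    · rw [Set.indicator_of_mem he]
      exact Submodule.smul_mem _ _
        (by rw [Phibar_rhoM]; exact Submodule.subset_span ⟨e, he.1, rfl⟩)
    · rw [Set.indicator_of_notMem he, zero_smul]
      exact Submodule.zero_mem _

/-- The induced surjection `Φ̄_{F,R} : W_{F,R} → (E → ℝ)/ℝ^F`. -/
def PhibarFR (a : E → (M →ₗ[ℝ] ℝ)) (r : E → ℝ) (F : Set E) (R : Set M) :
    Wspace a r F R →ₗ[ℝ] ((E → ℝ) ⧸ RF E F) :=
  (spanSigma a r F R).liftQ ((RF E F).mkQ ∘ₗ Phibar a) (spanSigma_le_ker a r F R)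

/-- `F ⊆ E` is a flat of the configuration `a`. -/
def IsFlat (a : E → (M →ₗ[ℝ] ℝ)) (F : Set E) : Prop :=
  F = {e : E | a e ∈ Submodule.span ℝ (a '' F)}

/-- The Bergman cone of a flag `𝒻 : F = F_0 ⊊ F_1 ⊊ ⋯ ⊊ F_k = E`:
`{c_1 δ_{F_1} + ⋯ + c_{k-1} δ_{F_{k-1}} + c δ_E : c_1, …, c_{k-1} ≥ 0, c ∈ ℝ} ⊆ ℝ^E`. -/
def bergCone {E : Type*} [Fintype E] (k : ℕ) (flag : Fin (k + 1) → Set E) : Set (E → ℝ) :=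
  {v | ∃ c : Fin (k + 1) → ℝ, c 0 = 0 ∧ (∀ i : Fin (k + 1), 0 < i.val → i.val < k → 0 ≤ c i) ∧
    v = ∑ i : Fin (k + 1), c i • (flag i).indicator (1 : E → ℝ)}

/-- The cone `C^{(F,R)}_𝒻 = Φ̄_{F,R}⁻¹(β_𝒻) ⊆ W_{F,R}` of `Trop(𝔐_𝒜)`, where
`β_𝒻 ⊆ (E → ℝ)/ℝ^F` is the image of the Bergman cone of the flag `𝒻`. -/
def Ccone (a : E → (M →ₗ[ℝ] ℝ)) (r : E → ℝ) (F : Set E) (R : Set M)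
    (k : ℕ) (flag : Fin (k + 1) → Set E) : Set (Wspace a r F R) :=
  PhibarFR a r F R ⁻¹' ((RF E F).mkQ '' bergCone k flag)

/-!
A closed halfspace containing `R` also contains `R' ⊆ closure R`, so the generators of `σ_{F,R}` are
among those of `σ_{S,R'}`. Every hyperplane of `𝒜_S` has `R'` on one of its closed sides, so `Φ̄`
maps `span(σ_{S,R'})` onto all of `ℝ^S`. Hence a vector of `Ñ` whose image under `Φ̄` lies in a set
`B` up to an error in `ℝ^S` can be corrected within `span(σ_{S,R'})` to one mapped into `B` exactly,
and projecting `W_{F,R} → W_{S,R'}` amounts to reducing the Bergman cone of `𝒻` modulo `ℝ^S`. That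
reduction kills the indicators of `F_0, …, F_j = S` and leaves the Bergman cone of the truncated
flag.
-/

lemma image_mapQ_id_preimage_mapQ {K V X : Type*} [Ring K] [AddCommGroup V] [Module K V]
    [AddCommGroup X] [Module K X] {P Q : Submodule K V} {U T : Submodule K X} (φ : V →ₗ[K] X)
    (hPU : P ≤ U.comap φ) (hPQ : P ≤ Q) (hUT : U ≤ T) (hQT : Q.map φ = T) (B : Set X) :
    P.mapQ Q LinearMap.id hPQ '' (P.mapQ U φ hPU ⁻¹' (U.mkQ '' B)) =
      Q.mapQ T φ (map_le_iff_le_comap.1 hQT.le) ⁻¹' (T.mkQ '' B) := by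
  ext w
  obtain ⟨v, rfl⟩ := Q.mkQ_surjective w
  constructor
  · rintro ⟨u, ⟨b, hb, hbu⟩, huv⟩
    obtain ⟨u, rfl⟩ := P.mkQ_surjective u
    have hbu : b - φ u ∈ U := (Submodule.Quotient.eq U).1 hbu
    rw [← huv]
    exact ⟨b, hb, (Submodule.Quotient.eq T).2 (hUT hbu)⟩
  · rintro ⟨b, hb, hbv⟩
    obtain ⟨s, hs, hsb⟩ : b - φ v ∈ Q.map φ := hQT ▸ (Submodule.Quotient.eq T).1 hbv
    refine ⟨P.mkQ (v + s), ⟨b, hb, (Submodule.Quotient.eq U).2 ?_⟩, (Submodule.Quotient.eq Q).2 ?_⟩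
    · simp [hsb]
    · simpa using hs

omit [Fintype E] [DecidableEq E] in
lemma isClosed_Hplus (a : E → (M →ₗ[ℝ] ℝ)) (r : E → ℝ) (e : E) : IsClosed (Hplus a r e) :=
  isClosed_le ((a e).continuous_of_finiteDimensional.add continuous_const) continuous_const

omit [Fintype E] [DecidableEq E] in
lemma isClosed_Hminus (a : E → (M →ₗ[ℝ] ℝ)) (r : E → ℝ) (e : E) : IsClosed (Hminus a r e) :=
  isClosed_le continuous_const ((a e).continuous_of_finiteDimensional.add continuous_const)

omit [Fintype E] [DecidableEq E] in
lemma posSet_mono (a : E → (M →ₗ[ℝ] ℝ)) (r : E → ℝ) {F S : Set E} {R R' : Set M}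
    (hFS : F ⊆ S) (hsub : R' ⊆ closure R) : posSet a r F R ⊆ posSet a r S R' :=
  fun e he => ⟨hFS he.1, hsub.trans (closure_minimal he.2 (isClosed_Hplus a r e))⟩

omit [Fintype E] [DecidableEq E] in
lemma negSet_mono (a : E → (M →ₗ[ℝ] ℝ)) (r : E → ℝ) {F S : Set E} {R R' : Set M}
    (hFS : F ⊆ S) (hsub : R' ⊆ closure R) : negSet a r F R ⊆ negSet a r S R' :=
  fun e he => ⟨hFS he.1, hsub.trans (closure_minimal he.2 (isClosed_Hminus a r e))⟩

omit [Fintype E] [DecidableEq E] [FiniteDimensional ℝ M] in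
lemma posSet_union_negSet_subset (a : E → (M →ₗ[ℝ] ℝ)) (r : E → ℝ) (S : Set E) (R : Set M) :
    posSet a r S R ∪ negSet a r S R ⊆ S :=
  union_subset (sep_subset _ _) (sep_subset _ _)

omit [Fintype E] [DecidableEq E] [FiniteDimensional ℝ M] in
lemma IsFace.subset_posSet_union_negSet {a : E → (M →ₗ[ℝ] ℝ)} {r : E → ℝ} {S : Set E} {R : Set M}
    (hR : IsFace a r S R) : S ⊆ posSet a r S R ∪ negSet a r S R := by
  obtain ⟨m₀, rfl⟩ := hR
  intro e he
  rcases le_total (a e m₀ + r e) 0 with h | h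
  · exact Or.inl ⟨he, fun m hm => sign_nonpos_iff.1 (hm e he ▸ sign_nonpos_iff.2 h)⟩
  · exact Or.inr ⟨he, fun m hm => sign_nonneg_iff.1 (hm e he ▸ sign_nonneg_iff.2 h)⟩

omit [FiniteDimensional ℝ M] in
lemma rhoP_mem_sigmaCone {a : E → (M →ₗ[ℝ] ℝ)} {r : E → ℝ} {S : Set E} {R : Set M} {e : E}
    (he : e ∈ posSet a r S R) : rhoP a e ∈ sigmaCone a r S R := by
  have hsingle : (0 : E → ℝ) ≤ Pi.single e 1 := Pi.single_nonneg.2 zero_le_one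
  refine ⟨Pi.single e 1, 0, hsingle, fun _ => le_rfl, ?_⟩
  rw [Finset.sum_eq_single e (fun f _ hf => by simp [hf]) (by simp)]
  simp [he]

omit [FiniteDimensional ℝ M] in
lemma rhoM_mem_sigmaCone {a : E → (M →ₗ[ℝ] ℝ)} {r : E → ℝ} {S : Set E} {R : Set M} {e : E}
    (he : e ∈ negSet a r S R) : rhoM a e ∈ sigmaCone a r S R := by
  have hsingle : (0 : E → ℝ) ≤ Pi.single e 1 := Pi.single_nonneg.2 zero_le_one
  refine ⟨0, Pi.single e 1, fun _ => le_rfl, hsingle, ?_⟩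
  simp only [Pi.zero_apply, Set.indicator_zero', zero_smul, Finset.sum_const_zero, zero_add]
  rw [Finset.sum_eq_single e (fun f _ hf => by simp [hf]) (by simp)]
  simp [he]

lemma sum_indicator_smul_mem_span {K V ι : Type*} [Semiring K] [AddCommMonoid V] [Module K V]
    [Fintype ι] (s : Set ι) (c : ι → K) (v : ι → V) :
    ∑ i, s.indicator c i • v i ∈ span K (v '' s) := by
  refine Submodule.sum_mem _ fun i _ => ?_
  by_cases hi : i ∈ s
  · exact smul_mem _ _ (subset_span (mem_image_of_mem v hi))
  · simp [hi]

omit [FiniteDimensional ℝ M] in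
lemma spanSigma_eq_span (a : E → (M →ₗ[ℝ] ℝ)) (r : E → ℝ) (S : Set E) (R : Set M) :
    spanSigma a r S R = span ℝ (rhoP a '' posSet a r S R ∪ rhoM a '' negSet a r S R) := by
  apply le_antisymm
  · rw [spanSigma, span_le]
    rintro _ ⟨c, d, -, -, rfl⟩
    exact add_mem
      (span_mono subset_union_left (sum_indicator_smul_mem_span _ c _))
      (span_mono subset_union_right (sum_indicator_smul_mem_span _ d _))
  · refine span_mono (union_subset ?_ ?_)
    · exact image_subset_iff.2 fun e he => rhoP_mem_sigmaCone he
    · exact image_subset_iff.2 fun e he => rhoM_mem_sigmaCone he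

lemma spanSigma_mono (a : E → (M →ₗ[ℝ] ℝ)) (r : E → ℝ) {F S : Set E} {R R' : Set M}
    (hFS : F ⊆ S) (hsub : R' ⊆ closure R) : spanSigma a r F R ≤ spanSigma a r S R' := by
  simp only [spanSigma_eq_span]
  exact span_mono (union_subset_union (image_mono (posSet_mono a r hFS hsub))
    (image_mono (negSet_mono a r hFS hsub)))

lemma map_Phibar_spanSigma (a : E → (M →ₗ[ℝ] ℝ)) (r : E → ℝ) (S : Set E) (R : Set M) :
    (spanSigma a r S R).map (Phibar a) = RF E (posSet a r S R ∪ negSet a r S R) := by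
  simp only [spanSigma_eq_span, map_span, image_union, image_image, Phibar_rhoP, Phibar_rhoM, RF]

lemma RF_mono {F S : Set E} (h : F ⊆ S) : RF E F ≤ RF E S :=
  span_mono (image_mono h)

lemma indicator_one_mem_RF {T S : Set E} (h : T ⊆ S) : T.indicator (1 : E → ℝ) ∈ RF E S := by
  have hsum : T.indicator (1 : E → ℝ) = ∑ e, T.indicator (1 : E → ℝ) e • Pi.single e (1 : ℝ) := by
    simp only [← Pi.single_smul, smul_eq_mul, mul_one, Finset.univ_sum_single]
  rw [hsum]
  exact RF_mono h (sum_indicator_smul_mem_span T _ _)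

lemma mkQ_sum_mem_image_bergCone {k : ℕ} {flag : Fin (k + 1) → Set E} {S : Set E}
    (hS : flag 0 ⊆ S) {c : Fin (k + 1) → ℝ}
    (hc : ∀ i : Fin (k + 1), 0 < i.val → i.val < k → 0 ≤ c i) :
    (RF E S).mkQ (∑ i, c i • (flag i).indicator 1) ∈ (RF E S).mkQ '' bergCone k flag := by
  have h₀ : (RF E S).mkQ ((flag 0).indicator 1) = 0 :=
    (Submodule.Quotient.mk_eq_zero _).2 (indicator_one_mem_RF hS)
  refine ⟨_, ⟨Function.update c 0 0, Function.update_self .., fun i hi hik => ?_, rfl⟩, ?_⟩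
  · rw [Function.update_of_ne (Fin.pos_iff_ne_zero.1 hi)]
    exact hc i hi hik
  · simp only [Fin.sum_univ_succ, map_add, map_smul, h₀, smul_zero, ne_eq, Fin.succ_ne_zero,
      not_false_eq_true, Function.update_of_ne]

lemma mkQ_sum_eq_mkQ_sum_tail {m n : ℕ} {flag : Fin (m + (n + 1)) → Set E} (hflag : Monotone flag)
    (c : Fin (m + (n + 1)) → ℝ) :
    (RF E (flag (Fin.natAdd m 0))).mkQ (∑ i, c i • (flag i).indicator 1) =
      (RF E (flag (Fin.natAdd m 0))).mkQ
        (∑ i : Fin (n + 1), c (Fin.natAdd m i) • (flag (Fin.natAdd m i)).indicator 1) := by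
  refine (Submodule.Quotient.eq _).2 ?_
  rw [Fin.sum_univ_add, add_sub_cancel_right]
  exact Submodule.sum_mem _ fun i _ => smul_mem _ _ <|
    indicator_one_mem_RF (hflag (Nat.le_of_lt i.isLt))

lemma mkQ_image_bergCone_eq_tail {m n : ℕ} {flag : Fin (m + (n + 1)) → Set E}
    (hflag : Monotone flag) :
    (RF E (flag (Fin.natAdd m 0))).mkQ '' bergCone (m + n) flag =
      (RF E (flag (Fin.natAdd m 0))).mkQ '' bergCone n (fun i => flag (Fin.natAdd m i)) := by
  apply Subset.antisymm
  · rintro _ ⟨_, ⟨c, -, hc, rfl⟩, rfl⟩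
    refine mem_of_eq_of_mem (mkQ_sum_eq_mkQ_sum_tail hflag c) ?_
    exact mkQ_sum_mem_image_bergCone (flag := fun i => flag (Fin.natAdd m i))
      (c := fun i => c (Fin.natAdd m i)) Subset.rfl fun i hi hin =>
        hc (Fin.natAdd m i) (Nat.add_pos_right m hi) (Nat.add_lt_add_left hin m)
  · rintro _ ⟨_, ⟨c, hc₀, hc, rfl⟩, rfl⟩
    have hpad : ∀ i : Fin (m + (n + 1)), i.val < m + n → 0 ≤ (Fin.append 0 c i : ℝ) := by
      refine Fin.addCases (fun i _ => by simp) fun i hi => ?_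
      rw [Fin.append_right]
      rcases eq_or_ne i 0 with rfl | hi₀
      · exact hc₀.ge
      · exact hc i (Fin.pos_iff_ne_zero.2 hi₀) (Nat.lt_of_add_lt_add_left hi)
    have hsum := mkQ_sum_eq_mkQ_sum_tail hflag (Fin.append 0 c)
    simp only [Fin.append_right] at hsum
    exact mem_of_eq_of_mem hsum.symm
      (mkQ_sum_mem_image_bergCone (hflag (Nat.zero_le m)) fun i _ => hpad i)

lemma mkQ_image_bergCone_eq_truncation {k m n : ℕ} (hk : m + n = k) {flag : Fin (k + 1) → Set E}
    (hflag : Monotone flag) :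
    (RF E (flag ⟨m, by omega⟩)).mkQ '' bergCone k flag =
      (RF E (flag ⟨m, by omega⟩)).mkQ '' bergCone n (fun i => flag ⟨m + i, by omega⟩) := by
  subst hk
  exact mkQ_image_bergCone_eq_tail hflag

theorem Ccone_projects_onto_truncated_general
    (a : E → (M →ₗ[ℝ] ℝ)) (r : E → ℝ) (F : Set E) (R : Set M)
    (k : ℕ) (flag : Fin (k + 1) → Set E) (hflag : Monotone flag)
    (j : Fin (k + 1)) (n : ℕ) (hn : j.val + n = k) (hF : F ⊆ flag j)
    (R' : Set M) (hR' : flag j ⊆ posSet a r (flag j) R' ∪ negSet a r (flag j) R')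
    (hsub : R' ⊆ closure R) :
    ∃ hle : spanSigma a r F R ≤ spanSigma a r (flag j) R',
      (Submodule.mapQ (spanSigma a r F R) (spanSigma a r (flag j) R') LinearMap.id
            (fun x hx => hle hx)) ''
          Ccone a r F R k flag =
        Ccone a r (flag j) R' n (fun i => flag ⟨j + i, by omega⟩) := by
  have hspan : (spanSigma a r (flag j) R').map (Phibar a) = RF E (flag j) := by
    rw [map_Phibar_spanSigma, (posSet_union_negSet_subset a r _ R').antisymm hR']
  have hker : spanSigma a r F R ≤ (RF E F).comap (Phibar a) := by
    simpa only [LinearMap.ker_comp, ker_mkQ] using spanSigma_le_ker a r F R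
  have hberg := mkQ_image_bergCone_eq_truncation hn hflag
  refine ⟨spanSigma_mono a r hF hsub, ?_⟩
  exact (image_mapQ_id_preimage_mapQ (Phibar a) hker _ (RF_mono hF) hspan _).trans
    (congrArg (PhibarFR a r (flag j) R' ⁻¹' ·) hberg)

/-- Second part of Lemma 6.2: if `S = F_j` is a flat of the flag `𝒻` and `R'` is a face of
`𝒜_S` contained in the closure of `R`, then `span(σ_{F,R}) ⊆ span(σ_{S,R'})` and the induced
map `W_{F,R} → W_{S,R'}` maps `C^{(F,R)}_𝒻` onto `C^{(S,R')}_{trunc_S(𝒻)}`. -/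
theorem Ccone_projects_onto_truncated
    (a : E → (M →ₗ[ℝ] ℝ)) (r : E → ℝ)
    (ha : ∀ e, a e ≠ 0) (hspan : Submodule.span ℝ (Set.range a) = ⊤)
    (F : Set E) (hF : IsFlat a F) (R : Set M) (hR : IsFace a r F R)
    (k : ℕ) (flag : Fin (k + 1) → Set E)
    (hflat : ∀ i, IsFlat a (flag i)) (hmono : StrictMono flag)
    (h0 : flag 0 = F) (hlast : flag (Fin.last k) = Set.univ)
    (j : Fin (k + 1)) (S : Set E) (hS : S = flag j)
    (R' : Set M) (hR' : IsFace a r S R') (hsub : R' ⊆ closure R) :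
    ∃ hle : spanSigma a r F R ≤ spanSigma a r S R',
      (Submodule.mapQ (spanSigma a r F R) (spanSigma a r S R') LinearMap.id
            (fun x hx => hle hx)) ''
          Ccone a r F R k flag =
        Ccone a r S R' (k - j.val)
          (fun i : Fin (k - j.val + 1) =>
            flag ⟨j.val + i.val, by have := i.isLt; have := j.isLt; omega⟩) := by
  subst hS
  exact Ccone_projects_onto_truncated_general a r F R k flag hmono.monotone j _
    (Nat.add_sub_cancel' j.is_le) (h0 ▸ hmono.monotone (Fin.zero_le j))
    R' hR'.subset_posSet_union_negSet hsub

end
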